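/- For all s > 0, μ(s) ≥ −g·k + s·C₂, where C₂ := inf of E1(φ,ψ) over all admissible pairs (φ,ψ) with J(φ,ψ) = 1; moreover C₂ ≥ 0. -/

import Mathlib

open Set MeasureTheory intervalIntegral Filter Topology

noncomputable section

namespace RT

/-- The piecewise integral `∫_{-m}^0 + ∫_0^ℓ`. -/
def pwInt (m l : ℝ) (f : ℝ → ℝ) : ℝ :=
  (∫ x in (-m)..(0:ℝ), f x) + ∫ x in (0:ℝ)..l, f x

/-- `f` restricted to `[-m,0)` extends continuously to `[-m,0]`, and `f` restricted to
`(0,ℓ]` extends continuously to `[0,ℓ]`. -/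
def PiecewiseCont (m l : ℝ) (f : ℝ → ℝ) : Prop :=
  (∃ F : ℝ → ℝ, ContinuousOn F (Icc (-m) 0) ∧ EqOn f F (Ico (-m) 0)) ∧
  (∃ F : ℝ → ℝ, ContinuousOn F (Icc 0 l) ∧ EqOn f F (Ioc 0 l))

/-- A profile function: the restriction to `[-m,0)` extends continuously to `[-m,0]`, and
the function is continuous on `[0,ℓ]` (hence right-continuous at `0`). -/
def Profile (m l : ℝ) (f : ℝ → ℝ) : Prop :=
  (∃ F : ℝ → ℝ, ContinuousOn F (Icc (-m) 0) ∧ EqOn f F (Ico (-m) 0)) ∧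
  ContinuousOn f (Icc 0 l)

/-- The four steady-state profiles `ρ0, p, ε0, δ0` with their positivity assumptions. -/
def ProfilesHyp (m l : ℝ) (ρ0 p ε0 δ0 : ℝ → ℝ) : Prop :=
  Profile m l ρ0 ∧ Profile m l p ∧ Profile m l ε0 ∧ Profile m l δ0 ∧
  (∀ x ∈ Icc (-m) l, 0 < ρ0 x) ∧ (∀ x ∈ Icc (-m) l, 0 < p x) ∧
  (∀ x ∈ Icc (-m) l, 0 < ε0 x) ∧ (∀ x ∈ Icc (-m) l, 0 ≤ δ0 x)

/-- `f` is continuous on `[-m,ℓ]` and continuously differentiable on `[-m,0]` and on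
`[0,ℓ]`, with piecewise derivative `fd`. -/
def PiecewiseC1 (m l : ℝ) (f fd : ℝ → ℝ) : Prop :=
  ContinuousOn f (Icc (-m) l) ∧
  (∀ x ∈ Ico (-m) 0, HasDerivWithinAt f (fd x) (Icc (-m) 0) x) ∧
  (∀ x ∈ Ioc 0 l, HasDerivWithinAt f (fd x) (Icc 0 l) x) ∧
  PiecewiseCont m l fd

/-- An admissible pair `(φ,ψ)` with piecewise derivatives `(φd,ψd)`. -/
def Admissible (m l : ℝ) (φ ψ φd ψd : ℝ → ℝ) : Prop :=
  PiecewiseC1 m l φ φd ∧ PiecewiseC1 m l ψ ψd ∧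
  φ (-m) = 0 ∧ φ l = 0 ∧ ψ (-m) = 0 ∧ ψ l = 0

/-- The energy `E(φ,ψ;s)`. -/
def energyE (m l g σ k : ℝ) (ρ0 p ε0 δ0 : ℝ → ℝ) (φ ψ φd ψd : ℝ → ℝ) (s : ℝ) : ℝ :=
  σ * k ^ 2 / 2 * (ψ 0) ^ 2
  + (1 / 2) * pwInt m l (fun x =>
      (s * δ0 x + p x * ρ0 x) * (ψd x + k * φ x) ^ 2 - 2 * g * ρ0 x * k * φ x * ψ x)
  + (s / 2) * pwInt m l (fun x =>
      ε0 x * ((φd x - k * ψ x) ^ 2 + (ψd x - k * φ x) ^ 2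
        + (1 / 3) * (ψd x + k * φ x) ^ 2))

/-- The normalization functional `J(φ,ψ)`. -/
def energyJ (m l : ℝ) (ρ0 : ℝ → ℝ) (φ ψ : ℝ → ℝ) : ℝ :=
  (1 / 2) * pwInt m l (fun x => ρ0 x * ((φ x) ^ 2 + (ψ x) ^ 2))

/-- The viscous part `E1(φ,ψ)` of the energy. -/
def energyE1 (m l k : ℝ) (ε0 δ0 : ℝ → ℝ) (φ ψ φd ψd : ℝ → ℝ) : ℝ :=
  (1 / 2) * pwInt m l (fun x => (δ0 x + ε0 x / 3) * (ψd x + k * φ x) ^ 2)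
  + (1 / 2) * pwInt m l (fun x =>
      ε0 x * ((φd x - k * ψ x) ^ 2 + (ψd x - k * φ x) ^ 2))

/-- `μ(s)`: the infimum of `E(·,·;s)` over admissible pairs with `J = 1`. -/
def muInf (m l g σ k : ℝ) (ρ0 p ε0 δ0 : ℝ → ℝ) (s : ℝ) : ℝ :=
  sInf { e : ℝ | ∃ φ ψ φd ψd : ℝ → ℝ, Admissible m l φ ψ φd ψd ∧
    energyJ m l ρ0 φ ψ = 1 ∧ e = energyE m l g σ k ρ0 p ε0 δ0 φ ψ φd ψd s }

/-- The hydrostatic steady-state relation `ρ0' = -g ρ0 / p` on each piece. -/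
def Hydrostatic (m l g : ℝ) (ρ0 p : ℝ → ℝ) : Prop :=
  (∀ x ∈ Ico (-m) 0, HasDerivWithinAt ρ0 (-g * ρ0 x / p x) (Ico (-m) 0) x) ∧
  (∀ x ∈ Ioc 0 l, HasDerivWithinAt ρ0 (-g * ρ0 x / p x) (Ioc 0 l) x)

end RT

/-!
The density of `E` contains `s` times the density of `E1`; what is left is the surface tension
term and the compression term `p ρ0 (ψ' + k φ)²`, both nonnegative, and the gravity term
`-g k ∫ ρ0 φ ψ`. Since `2 |φ ψ| ≤ φ² + ψ²`, the gravity term is at least `-|g k| J(φ,ψ)`. Hence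
`E(φ,ψ;s) ≥ -|g k| + s E1(φ,ψ)` whenever `J(φ,ψ) = 1`, and the theorem follows by taking infima.
The constraint set is nonempty, so no infimum takes the default value `sInf ∅ = 0`: rescaling
`φ(x) = (x + m) (ℓ - x)`, `ψ = 0` gives a normalized admissible pair.
-/

namespace RT

variable {m l : ℝ}

namespace PiecewiseCont

variable {f h : ℝ → ℝ}

theorem of_continuousOn (hm : 0 ≤ m) (hl : 0 ≤ l) (hf : ContinuousOn f (Icc (-m) l)) :
    PiecewiseCont m l f :=
  ⟨⟨f, hf.mono (Icc_subset_Icc_right hl), fun _ _ => rfl⟩,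
    ⟨f, hf.mono (Icc_subset_Icc_left (neg_nonpos.mpr hm)), fun _ _ => rfl⟩⟩

theorem comp₂ {G : ℝ × ℝ → ℝ} (hG : Continuous G) (hf : PiecewiseCont m l f)
    (hh : PiecewiseCont m l h) : PiecewiseCont m l (fun x => G (f x, h x)) := by
  obtain ⟨⟨F₁, cF₁, hF₁⟩, ⟨F₂, cF₂, hF₂⟩⟩ := hf
  obtain ⟨⟨H₁, cH₁, hH₁⟩, ⟨H₂, cH₂, hH₂⟩⟩ := hh
  exact ⟨⟨fun x => G (F₁ x, H₁ x), hG.comp_continuousOn (cF₁.prodMk cH₁),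
      fun x hx => by simp only [hF₁ hx, hH₁ hx]⟩,
    ⟨fun x => G (F₂ x, H₂ x), hG.comp_continuousOn (cF₂.prodMk cH₂),
      fun x hx => by simp only [hF₂ hx, hH₂ hx]⟩⟩

theorem add (hf : PiecewiseCont m l f) (hh : PiecewiseCont m l h) :
    PiecewiseCont m l (fun x => f x + h x) :=
  comp₂ continuous_add hf hh

theorem sub (hf : PiecewiseCont m l f) (hh : PiecewiseCont m l h) :
    PiecewiseCont m l (fun x => f x - h x) :=
  comp₂ continuous_sub hf hh

theorem mul (hf : PiecewiseCont m l f) (hh : PiecewiseCont m l h) :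
    PiecewiseCont m l (fun x => f x * h x) :=
  comp₂ continuous_mul hf hh

theorem const_mul (c : ℝ) (hf : PiecewiseCont m l f) : PiecewiseCont m l (fun x => c * f x) :=
  comp₂ (continuous_const.mul continuous_fst) hf hf

theorem pow (hf : PiecewiseCont m l f) (n : ℕ) : PiecewiseCont m l (fun x => f x ^ n) :=
  comp₂ (continuous_fst.pow n) hf hf

theorem intervalIntegrable_left (hm : 0 ≤ m) (hf : PiecewiseCont m l f) :
    IntervalIntegrable f volume (-m) 0 := by
  obtain ⟨⟨F, cF, hF⟩, -⟩ := hf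
  have hm' : -m ≤ 0 := neg_nonpos.mpr hm
  have hFi : IntervalIntegrable F volume (-m) 0 := cF.intervalIntegrable_of_Icc hm'
  rw [intervalIntegrable_iff_integrableOn_Ico_of_le hm'] at hFi ⊢
  exact hFi.congr_fun hF.symm measurableSet_Ico

theorem intervalIntegrable_right (hl : 0 ≤ l) (hf : PiecewiseCont m l f) :
    IntervalIntegrable f volume 0 l := by
  obtain ⟨-, ⟨F, cF, hF⟩⟩ := hf
  have hFi : IntervalIntegrable F volume 0 l := cF.intervalIntegrable_of_Icc hl
  rw [intervalIntegrable_iff_integrableOn_Ioc_of_le hl] at hFi ⊢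
  exact hFi.congr_fun hF.symm measurableSet_Ioc

end PiecewiseCont

theorem Profile.piecewiseCont {f : ℝ → ℝ} (hf : Profile m l f) : PiecewiseCont m l f :=
  ⟨hf.1, ⟨f, hf.2, fun _ _ => rfl⟩⟩

theorem PiecewiseC1.of_hasDerivAt {f fd : ℝ → ℝ} (hm : 0 ≤ m) (hl : 0 ≤ l)
    (hf : ∀ x, HasDerivAt f (fd x) x) (hfd : Continuous fd) : PiecewiseC1 m l f fd :=
  ⟨fun x _ => (hf x).continuousAt.continuousWithinAt,
    fun x _ => (hf x).hasDerivWithinAt, fun x _ => (hf x).hasDerivWithinAt,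
    .of_continuousOn hm hl hfd.continuousOn⟩

theorem PiecewiseC1.const_mul {f fd : ℝ → ℝ} (hf : PiecewiseC1 m l f fd) (c : ℝ) :
    PiecewiseC1 m l (fun x => c * f x) (fun x => c * fd x) :=
  ⟨continuousOn_const.mul hf.1, fun x hx => (hf.2.1 x hx).const_mul c,
    fun x hx => (hf.2.2.1 x hx).const_mul c, hf.2.2.2.const_mul c⟩

theorem Admissible.const_mul {φ ψ φd ψd : ℝ → ℝ} (h : Admissible m l φ ψ φd ψd) (c : ℝ) :
    Admissible m l (fun x => c * φ x) (fun x => c * ψ x)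
      (fun x => c * φd x) (fun x => c * ψd x) := by
  obtain ⟨hφ, hψ, hφm, hφl, hψm, hψl⟩ := h
  exact ⟨hφ.const_mul c, hψ.const_mul c, by simp [hφm], by simp [hφl],
    by simp [hψm], by simp [hψl]⟩

section PwInt

variable {f h : ℝ → ℝ}

theorem pwInt_add (hm : 0 ≤ m) (hl : 0 ≤ l) (hf : PiecewiseCont m l f)
    (hh : PiecewiseCont m l h) :
    pwInt m l (fun x => f x + h x) = pwInt m l f + pwInt m l h := by
  unfold pwInt
  rw [integral_add (hf.intervalIntegrable_left hm) (hh.intervalIntegrable_left hm),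
    integral_add (hf.intervalIntegrable_right hl) (hh.intervalIntegrable_right hl)]
  ring

theorem pwInt_const_mul (m l c : ℝ) (f : ℝ → ℝ) :
    pwInt m l (fun x => c * f x) = c * pwInt m l f := by
  simp only [pwInt, intervalIntegral.integral_const_mul, mul_add]

theorem pwInt_nonneg (hm : 0 ≤ m) (hl : 0 ≤ l) (hf : ∀ x ∈ Icc (-m) l, 0 ≤ f x) :
    0 ≤ pwInt m l f :=
  add_nonneg
    (integral_nonneg (neg_nonpos.mpr hm) fun x hx => hf x ⟨hx.1, hx.2.trans hl⟩)
    (integral_nonneg hl fun x hx => hf x ⟨(neg_nonpos.mpr hm).trans hx.1, hx.2⟩)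

theorem pwInt_pos (hm : 0 < m) (hl : 0 < l) (cf : PiecewiseCont m l f)
    (hf : ∀ x ∈ Ioo (-m) l, 0 < f x) : 0 < pwInt m l f :=
  add_pos
    (intervalIntegral_pos_of_pos_on (cf.intervalIntegrable_left hm.le)
      (fun x hx => hf x ⟨hx.1, hx.2.trans hl⟩) (neg_neg_of_pos hm))
    (intervalIntegral_pos_of_pos_on (cf.intervalIntegrable_right hl.le)
      (fun x hx => hf x ⟨(neg_neg_of_pos hm).trans hx.1, hx.2⟩) hl)

theorem abs_pwInt_le_of_abs_le (hm : 0 ≤ m) (hl : 0 ≤ l) (ch : PiecewiseCont m l h)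
    (hfh : ∀ x ∈ Icc (-m) l, |f x| ≤ h x) : |pwInt m l f| ≤ pwInt m l h := by
  have hm' : -m ≤ 0 := neg_nonpos.mpr hm
  simp only [← Real.norm_eq_abs] at hfh ⊢
  refine (norm_add_le _ _).trans (add_le_add ?_ ?_)
  · exact norm_integral_le_of_norm_le hm'
      (.of_forall fun x hx => hfh x ⟨hx.1.le, hx.2.trans hl⟩) (ch.intervalIntegrable_left hm)
  · exact norm_integral_le_of_norm_le hl
      (.of_forall fun x hx => hfh x ⟨hm'.trans hx.1.le, hx.2⟩) (ch.intervalIntegrable_right hl)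

end PwInt

section Energy

variable {g σ k s : ℝ} {ρ0 p ε0 δ0 φ ψ φd ψd : ℝ → ℝ}

theorem energyE1_nonneg (hm : 0 ≤ m) (hl : 0 ≤ l) (hε : ∀ x ∈ Icc (-m) l, 0 ≤ ε0 x)
    (hδ : ∀ x ∈ Icc (-m) l, 0 ≤ δ0 x) : 0 ≤ energyE1 m l k ε0 δ0 φ ψ φd ψd := by
  have bulk : 0 ≤ pwInt m l (fun x => (δ0 x + ε0 x / 3) * (ψd x + k * φ x) ^ 2) :=
    pwInt_nonneg hm hl fun x hx => by
      have := hε x hx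
      have := hδ x hx
      positivity
  have shear : 0 ≤ pwInt m l
      (fun x => ε0 x * ((φd x - k * ψ x) ^ 2 + (ψd x - k * φ x) ^ 2)) :=
    pwInt_nonneg hm hl fun x hx => by
      have := hε x hx
      positivity
  unfold energyE1
  positivity

theorem energyE_eq_mul_energyE1_add (hm : 0 ≤ m) (hl : 0 ≤ l)
    (cρ : PiecewiseCont m l ρ0) (cp : PiecewiseCont m l p)
    (cε : PiecewiseCont m l ε0) (cδ : PiecewiseCont m l δ0)
    (cφ : PiecewiseCont m l φ) (cψ : PiecewiseCont m l ψ)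
    (cφd : PiecewiseCont m l φd) (cψd : PiecewiseCont m l ψd) :
    energyE m l g σ k ρ0 p ε0 δ0 φ ψ φd ψd s =
      s * energyE1 m l k ε0 δ0 φ ψ φd ψd + (σ * k ^ 2 / 2 * ψ 0 ^ 2
        + 1 / 2 * pwInt m l (fun x => p x * ρ0 x * (ψd x + k * φ x) ^ 2)
        + -(g * k) * pwInt m l (fun x => ρ0 x * (φ x * ψ x))) := by
  have cdiv := (cψd.add (cφ.const_mul k)).pow 2
  have cshear := cε.mul
    (((cφd.sub (cψ.const_mul k)).pow 2).add ((cψd.sub (cφ.const_mul k)).pow 2))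
  have split_compression : pwInt m l (fun x =>
      (s * δ0 x + p x * ρ0 x) * (ψd x + k * φ x) ^ 2 - 2 * g * ρ0 x * k * φ x * ψ x) =
      s * pwInt m l (fun x => δ0 x * (ψd x + k * φ x) ^ 2)
        + pwInt m l (fun x => p x * ρ0 x * (ψd x + k * φ x) ^ 2)
        + -(2 * g * k) * pwInt m l (fun x => ρ0 x * (φ x * ψ x)) := by
    rw [← pwInt_const_mul, ← pwInt_const_mul,
      ← pwInt_add hm hl ((cδ.mul cdiv).const_mul s) ((cp.mul cρ).mul cdiv),
      ← pwInt_add hm hl (((cδ.mul cdiv).const_mul s).add ((cp.mul cρ).mul cdiv))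
        ((cρ.mul (cφ.mul cψ)).const_mul _)]
    congr 1 with x
    ring
  have split_viscous : pwInt m l (fun x => ε0 x * ((φd x - k * ψ x) ^ 2
      + (ψd x - k * φ x) ^ 2 + (1 / 3) * (ψd x + k * φ x) ^ 2)) =
      pwInt m l (fun x => ε0 x * ((φd x - k * ψ x) ^ 2 + (ψd x - k * φ x) ^ 2))
        + 1 / 3 * pwInt m l (fun x => ε0 x * (ψd x + k * φ x) ^ 2) := by
    rw [← pwInt_const_mul, ← pwInt_add hm hl cshear ((cε.mul cdiv).const_mul _)]
    congr 1 with x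
    ring
  have split_bulk : pwInt m l (fun x => (δ0 x + ε0 x / 3) * (ψd x + k * φ x) ^ 2) =
      pwInt m l (fun x => δ0 x * (ψd x + k * φ x) ^ 2)
        + 1 / 3 * pwInt m l (fun x => ε0 x * (ψd x + k * φ x) ^ 2) := by
    rw [← pwInt_const_mul, ← pwInt_add hm hl (cδ.mul cdiv) ((cε.mul cdiv).const_mul _)]
    congr 1 with x
    ring
  unfold energyE energyE1
  rw [split_compression, split_viscous, split_bulk]
  ring

theorem abs_pwInt_mul_le_energyJ (hm : 0 ≤ m) (hl : 0 ≤ l) (cρ : PiecewiseCont m l ρ0)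
    (cφ : PiecewiseCont m l φ) (cψ : PiecewiseCont m l ψ)
    (hρ : ∀ x ∈ Icc (-m) l, 0 ≤ ρ0 x) :
    |pwInt m l (fun x => ρ0 x * (φ x * ψ x))| ≤ energyJ m l ρ0 φ ψ := by
  rw [energyJ, ← pwInt_const_mul]
  refine abs_pwInt_le_of_abs_le hm hl
    ((cρ.mul ((cφ.pow 2).add (cψ.pow 2))).const_mul _) fun x hx => ?_
  calc |ρ0 x * (φ x * ψ x)| = ρ0 x * (|φ x| * |ψ x|) := by
        rw [abs_mul, abs_mul, abs_of_nonneg (hρ x hx)]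
    _ ≤ ρ0 x * ((φ x ^ 2 + ψ x ^ 2) / 2) := by
        gcongr
        · exact hρ x hx
        · linarith [two_mul_le_add_sq |φ x| |ψ x|, sq_abs (φ x), sq_abs (ψ x)]
    _ = 1 / 2 * (ρ0 x * (φ x ^ 2 + ψ x ^ 2)) := by ring

theorem neg_abs_mul_energyJ_add_mul_energyE1_le_energyE (hm : 0 ≤ m) (hl : 0 ≤ l)
    (hσ : 0 ≤ σ) (cρ : PiecewiseCont m l ρ0) (cp : PiecewiseCont m l p)
    (cε : PiecewiseCont m l ε0) (cδ : PiecewiseCont m l δ0)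
    (hρ : ∀ x ∈ Icc (-m) l, 0 ≤ ρ0 x) (hp : ∀ x ∈ Icc (-m) l, 0 ≤ p x)
    (hφ : PiecewiseC1 m l φ φd) (hψ : PiecewiseC1 m l ψ ψd) :
    -|g * k| * energyJ m l ρ0 φ ψ + s * energyE1 m l k ε0 δ0 φ ψ φd ψd
      ≤ energyE m l g σ k ρ0 p ε0 δ0 φ ψ φd ψd s := by
  have cφ := PiecewiseCont.of_continuousOn hm hl hφ.1
  have cψ := PiecewiseCont.of_continuousOn hm hl hψ.1
  rw [energyE_eq_mul_energyE1_add hm hl cρ cp cε cδ cφ cψ hφ.2.2.2 hψ.2.2.2]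
  have tension : 0 ≤ σ * k ^ 2 / 2 * ψ 0 ^ 2 := by positivity
  have compression : 0 ≤ pwInt m l (fun x => p x * ρ0 x * (ψd x + k * φ x) ^ 2) :=
    pwInt_nonneg hm hl fun x hx => mul_nonneg (mul_nonneg (hp x hx) (hρ x hx)) (sq_nonneg _)
  have gravity : g * k * pwInt m l (fun x => ρ0 x * (φ x * ψ x))
      ≤ |g * k| * energyJ m l ρ0 φ ψ :=
    calc _ ≤ |g * k| * |pwInt m l (fun x => ρ0 x * (φ x * ψ x))| :=
          (le_abs_self _).trans_eq (abs_mul _ _)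
      _ ≤ _ := by
          gcongr
          exact abs_pwInt_mul_le_energyJ hm hl cρ cφ cψ hρ
  linarith

theorem energyJ_const_mul (c : ℝ) :
    energyJ m l ρ0 (fun x => c * φ x) (fun x => c * ψ x) = c ^ 2 * energyJ m l ρ0 φ ψ := by
  unfold energyJ
  rw [mul_left_comm, ← pwInt_const_mul m l (c ^ 2)]
  congr 2 with x
  ring

end Energy

theorem admissible_parabola (hm : 0 ≤ m) (hl : 0 ≤ l) :
    Admissible m l (fun x => (x + m) * (l - x)) (fun _ => 0)
      (fun x => l - m - 2 * x) (fun _ => 0) := by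
  refine ⟨.of_hasDerivAt hm hl (fun x => ?_) (by fun_prop),
    .of_hasDerivAt hm hl (fun x => hasDerivAt_const x _) continuous_const,
    by simp, by simp, rfl, rfl⟩
  exact (((hasDerivAt_id' x).add_const m).mul ((hasDerivAt_id' x).const_sub l)).congr_deriv
    (by ring)

theorem energyJ_parabola_pos {ρ0 : ℝ → ℝ} (hm : 0 < m) (hl : 0 < l)
    (cρ : PiecewiseCont m l ρ0) (hρ : ∀ x ∈ Icc (-m) l, 0 < ρ0 x) :
    0 < energyJ m l ρ0 (fun x => (x + m) * (l - x)) (fun _ => 0) := by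
  have cφψ : PiecewiseCont m l (fun x => ((x + m) * (l - x)) ^ 2 + 0 ^ 2) :=
    .of_continuousOn hm.le hl.le (by fun_prop)
  refine mul_pos one_half_pos (pwInt_pos hm hl (cρ.mul cφψ) fun x hx => ?_)
  have hρx : 0 < ρ0 x := hρ x (Ioo_subset_Icc_self hx)
  have hleft : 0 < x + m := by linarith [hx.1]
  have hright : 0 < l - x := sub_pos.mpr hx.2
  positivity

theorem exists_admissible_energyJ_eq_one {ρ0 : ℝ → ℝ} (hm : 0 < m) (hl : 0 < l)
    (cρ : PiecewiseCont m l ρ0) (hρ : ∀ x ∈ Icc (-m) l, 0 < ρ0 x) :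
    ∃ φ ψ φd ψd : ℝ → ℝ, Admissible m l φ ψ φd ψd ∧ energyJ m l ρ0 φ ψ = 1 := by
  have hJ := energyJ_parabola_pos hm hl cρ hρ
  set J := energyJ m l ρ0 (fun x => (x + m) * (l - x)) (fun _ => 0)
  refine ⟨_, _, _, _, (admissible_parabola hm.le hl.le).const_mul (√J)⁻¹, ?_⟩
  rw [energyJ_const_mul, inv_pow, Real.sq_sqrt hJ.le, inv_mul_cancel₀ hJ.ne']

/-- The constant `C₂`: the infimum of `E1` over admissible pairs with `J = 1`. -/
def viscousInf (m l k : ℝ) (ρ0 ε0 δ0 : ℝ → ℝ) : ℝ :=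
  sInf { e : ℝ | ∃ φ ψ φd ψd : ℝ → ℝ, Admissible m l φ ψ φd ψd ∧
    energyJ m l ρ0 φ ψ = 1 ∧ e = energyE1 m l k ε0 δ0 φ ψ φd ψd }

section ViscousInf

variable {k : ℝ} {ρ0 ε0 δ0 φ ψ φd ψd : ℝ → ℝ}

theorem viscousInf_nonneg (hm : 0 ≤ m) (hl : 0 ≤ l) (hε : ∀ x ∈ Icc (-m) l, 0 ≤ ε0 x)
    (hδ : ∀ x ∈ Icc (-m) l, 0 ≤ δ0 x) : 0 ≤ viscousInf m l k ρ0 ε0 δ0 := by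
  refine Real.sInf_nonneg ?_
  rintro _ ⟨φ, ψ, φd, ψd, -, -, rfl⟩
  exact energyE1_nonneg hm hl hε hδ

theorem viscousInf_le_energyE1 (hm : 0 ≤ m) (hl : 0 ≤ l) (hε : ∀ x ∈ Icc (-m) l, 0 ≤ ε0 x)
    (hδ : ∀ x ∈ Icc (-m) l, 0 ≤ δ0 x) (hadm : Admissible m l φ ψ φd ψd)
    (hJ : energyJ m l ρ0 φ ψ = 1) :
    viscousInf m l k ρ0 ε0 δ0 ≤ energyE1 m l k ε0 δ0 φ ψ φd ψd := by
  refine csInf_le ⟨0, ?_⟩ ⟨φ, ψ, φd, ψd, hadm, hJ, rfl⟩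
  rintro _ ⟨φ, ψ, φd, ψd, -, -, rfl⟩
  exact energyE1_nonneg hm hl hε hδ

end ViscousInf

theorem muInf_linear_lower_bound_general (m l g σ k : ℝ) (ρ0 p ε0 δ0 : ℝ → ℝ)
    (hm : 0 < m) (hl : 0 < l) (hσ : 0 ≤ σ)
    (cρ : PiecewiseCont m l ρ0) (cp : PiecewiseCont m l p)
    (cε : PiecewiseCont m l ε0) (cδ : PiecewiseCont m l δ0)
    (hρ : ∀ x ∈ Icc (-m) l, 0 < ρ0 x) (hp : ∀ x ∈ Icc (-m) l, 0 ≤ p x)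
    (hε : ∀ x ∈ Icc (-m) l, 0 ≤ ε0 x) (hδ : ∀ x ∈ Icc (-m) l, 0 ≤ δ0 x) :
    0 ≤ viscousInf m l k ρ0 ε0 δ0 ∧
    ∀ s : ℝ, 0 < s →
      -|g * k| + s * viscousInf m l k ρ0 ε0 δ0 ≤ muInf m l g σ k ρ0 p ε0 δ0 s := by
  refine ⟨viscousInf_nonneg hm.le hl.le hε hδ, fun s hs => ?_⟩
  obtain ⟨φ₀, ψ₀, φd₀, ψd₀, hadm₀, hJ₀⟩ := exists_admissible_energyJ_eq_one hm hl cρ hρ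
  refine le_csInf ⟨_, φ₀, ψ₀, φd₀, ψd₀, hadm₀, hJ₀, rfl⟩ ?_
  rintro _ ⟨φ, ψ, φd, ψd, hadm, hJ, rfl⟩
  calc -|g * k| + s * viscousInf m l k ρ0 ε0 δ0
      ≤ -|g * k| * energyJ m l ρ0 φ ψ + s * energyE1 m l k ε0 δ0 φ ψ φd ψd := by
        rw [hJ, mul_one]
        gcongr
        exact viscousInf_le_energyE1 hm.le hl.le hε hδ hadm hJ
    _ ≤ energyE m l g σ k ρ0 p ε0 δ0 φ ψ φd ψd s :=
        neg_abs_mul_energyJ_add_mul_energyE1_le_energyE hm.le hl.le hσ cρ cp cε cδ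
          (fun x hx => (hρ x hx).le) hp hadm.1 hadm.2.1

end RT

namespace RT

/-- The lower bound `μ(s) ≥ -g k + s C₂`, where `C₂` is the infimum of `E1` over the
normalized admissible set; moreover `C₂ ≥ 0`. -/
theorem muInf_linear_lower_bound (m l g σ k : ℝ) (ρ0 p ε0 δ0 : ℝ → ℝ)
    (hm : 0 < m) (hl : 0 < l) (hg : 0 < g) (hσ : 0 ≤ σ) (hk : 0 < k)
    (hprof : ProfilesHyp m l ρ0 p ε0 δ0) :
    0 ≤ sInf { e : ℝ | ∃ φ ψ φd ψd : ℝ → ℝ, Admissible m l φ ψ φd ψd ∧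
        energyJ m l ρ0 φ ψ = 1 ∧ e = energyE1 m l k ε0 δ0 φ ψ φd ψd } ∧
    ∀ s : ℝ, 0 < s →
      -g * k + s * sInf { e : ℝ | ∃ φ ψ φd ψd : ℝ → ℝ, Admissible m l φ ψ φd ψd ∧
          energyJ m l ρ0 φ ψ = 1 ∧ e = energyE1 m l k ε0 δ0 φ ψ φd ψd }
        ≤ muInf m l g σ k ρ0 p ε0 δ0 s := by
  obtain ⟨cρ, cp, cε, cδ, hρ, hp, hε, hδ⟩ := hprof
  simpa only [abs_of_pos (mul_pos hg hk), ← neg_mul, viscousInf] using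
    muInf_linear_lower_bound_general m l g σ k ρ0 p ε0 δ0 hm hl hσ
      cρ.piecewiseCont cp.piecewiseCont cε.piecewiseCont cδ.piecewiseCont
      hρ (fun x hx => (hp x hx).le) (fun x hx => (hε x hx).le) hδ

end RT
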